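/- arXiv:2212.04288 — 5 statements merged into one kernel-verified Lean document; each statement's English description precedes it below -/
import Mathlib

section
/- Let Σ be a real symmetric positive definite n×n matrix with largest eigenvalue λ₁, let M ≥ 1 be a natural number, let σ_y > 0, c > 0, and let μ ≤ M be a real number such that M²·n·λ₁² − M·(M−μ)·λ₁ > 0. If M − μ ≤ c²·M²·Tr(Σ·(c²·M·Σ + σ_y²·I)⁻¹·Σ), then c² ≥ σ_y²·(M−μ) / (M²·n·λ₁² − M·(M−μ)·λ₁). -/
open Matrix

lemma trace_aux {n : ℕ} (S : Matrix (Fin n) (Fin n) ℝ) (hS : S.PosDef) (a s : ℝ)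
    (ha : 0 < a) (hs : 0 < s) :
    (S * (a • S + s • (1 : Matrix (Fin n) (Fin n) ℝ))⁻¹ * S).trace
      = ∑ i, hS.1.eigenvalues i ^ 2 / (a * hS.1.eigenvalues i + s) := by
  obtain ⟨U, V, hUV, hVU, hSp⟩ : ∃ U V : Matrix (Fin n) (Fin n) ℝ, U * V = 1 ∧ V * U = 1 ∧
      S = U * diagonal hS.1.eigenvalues * V := by
    refine ⟨hS.1.eigenvectorUnitary, star (hS.1.eigenvectorUnitary : Matrix (Fin n) (Fin n) ℝ),
      Unitary.mul_star_self_of_mem hS.1.eigenvectorUnitary.2,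
      Unitary.star_mul_self_of_mem hS.1.eigenvectorUnitary.2, ?_⟩
    have := hS.1.spectral_theorem
    rw [Unitary.conjStarAlgAut_apply] at this
    exact this
  have hpos : ∀ i, 0 < hS.1.eigenvalues i := hS.eigenvalues_pos
  generalize hS.1.eigenvalues = l at *
  have key : ∀ d e : Fin n → ℝ, (U * diagonal d * V) * (U * diagonal e * V)
      = U * diagonal (fun i => d i * e i) * V := by
    intro d e
    rw [← diagonal_mul_diagonal]
    calc _ = U * diagonal d * (V * U) * diagonal e * V := by simp only [Matrix.mul_assoc]
      _ = _ := by rw [hVU]; simp only [Matrix.mul_assoc, Matrix.mul_one, Matrix.one_mul]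
  have hA : a • S + s • (1 : Matrix (Fin n) (Fin n) ℝ)
      = U * diagonal (fun i => a * l i + s) * V := by
    have : diagonal (fun i => a * l i + s) = a • diagonal l + s • (1 : Matrix (Fin n) (Fin n) ℝ) := by
      ext i j
      by_cases h : i = j
      · subst h; simp
      · simp [h]
    rw [this, hSp, Matrix.mul_add, Matrix.add_mul]
    simp [hUV]
  have hinv : (a • S + s • (1 : Matrix (Fin n) (Fin n) ℝ))⁻¹
      = U * diagonal (fun i => (a * l i + s)⁻¹) * V := by
    apply Matrix.inv_eq_right_inv
    rw [hA, key]
    have : (fun i => (a * l i + s) * (a * l i + s)⁻¹) = fun _ => (1 : ℝ) := by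
      funext i
      have := hpos i
      exact mul_inv_cancel₀ (by positivity)
    rw [this, diagonal_one, Matrix.mul_one, hUV]
  rw [hinv, hSp, key, key, Matrix.trace_mul_comm, ← Matrix.mul_assoc, hVU, Matrix.one_mul,
    trace_diagonal]
  refine Finset.sum_congr rfl fun i _ => ?_
  rw [div_eq_mul_inv]; ring

/-- necessity part of Theorem 2: a minimum MSE requirement `μ ≤ M` at the
legitimate receiver forces a lower bound on the squared signal scaling factor `c²`.
Here `S` plays the role of the covariance matrix Σ and `lam1` of its largest eigenvalue λ₁. -/
theorem stmt0 {n : ℕ} (hn : 1 ≤ n) (S : Matrix (Fin n) (Fin n) ℝ)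
    (hS : S.PosDef) (lam1 : ℝ)
    (hmax : ∀ i, hS.1.eigenvalues i ≤ lam1)
    (hatt : ∃ i, hS.1.eigenvalues i = lam1)
    (M : ℕ) (hM : 1 ≤ M) (σy c μ : ℝ) (hσy : 0 < σy) (hc : 0 < c)
    (hμ : μ ≤ (M : ℝ))
    (hden : 0 < (M : ℝ) ^ 2 * n * lam1 ^ 2 - (M : ℝ) * ((M : ℝ) - μ) * lam1)
    (hreq : (M : ℝ) - μ ≤
      c ^ 2 * (M : ℝ) ^ 2 *
        (S * ((c ^ 2 * (M : ℝ)) • S + σy ^ 2 • (1 : Matrix (Fin n) (Fin n) ℝ))⁻¹ * S).trace) :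
    c ^ 2 ≥ σy ^ 2 * ((M : ℝ) - μ) /
      ((M : ℝ) ^ 2 * n * lam1 ^ 2 - (M : ℝ) * ((M : ℝ) - μ) * lam1) := by
  obtain ⟨i0, hi0⟩ := hatt
  have hl : 0 < lam1 := hi0 ▸ hS.eigenvalues_pos i0
  have hM' : (0 : ℝ) < M := by exact_mod_cast hM
  have ha : 0 < c ^ 2 * (M : ℝ) := by positivity
  have hs : 0 < σy ^ 2 := by positivity
  rw [trace_aux S hS _ _ ha hs] at hreq
  have hle : ∑ i, hS.1.eigenvalues i ^ 2 / (c ^ 2 * (M : ℝ) * hS.1.eigenvalues i + σy ^ 2)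
      ≤ n * (lam1 ^ 2 / (c ^ 2 * (M : ℝ) * lam1 + σy ^ 2)) := by
    have : ∀ i ∈ (Finset.univ : Finset (Fin n)),
        hS.1.eigenvalues i ^ 2 / (c ^ 2 * (M : ℝ) * hS.1.eigenvalues i + σy ^ 2)
        ≤ lam1 ^ 2 / (c ^ 2 * (M : ℝ) * lam1 + σy ^ 2) := by
      intro i _
      have h0 := hS.eigenvalues_pos i
      have h1 := hmax i
      generalize hS.1.eigenvalues i = x at *
      generalize c ^ 2 * (M : ℝ) = a at *
      generalize σy ^ 2 = s at *
      rw [div_le_div_iff₀ (by positivity) (by positivity)]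
      have e1 : 0 ≤ a * (x * lam1) * (lam1 - x) :=
        mul_nonneg (by positivity) (by linarith)
      have e2 : 0 ≤ s * (lam1 + x) * (lam1 - x) :=
        mul_nonneg (by positivity) (by linarith)
      linarith
    have := Finset.sum_le_card_nsmul _ _ _ this
    simpa using this
  have h2 := hreq.trans (mul_le_mul_of_nonneg_left hle (by positivity))
  have hp : 0 < c ^ 2 * (M : ℝ) * lam1 + σy ^ 2 := by positivity
  rw [← mul_div_assoc, ← mul_div_assoc, le_div_iff₀ hp] at h2
  rw [ge_iff_le, div_le_iff₀ hden]
  linarith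
end

section
/- Let Σ be a real symmetric positive definite n×n matrix with largest eigenvalue λ₁, let M ≥ 1 be a natural number, and let c > 0 and σ > 0. Then c²·M²·Tr(Σ·(c²·M·Σ + σ²·I)⁻¹·Σ) ≤ c²·M²·n·λ₁² / (c²·M·λ₁ + σ²). -/
open Matrix

/-- key trace inequality, Eq. (15): for a symmetric positive definite
covariance matrix `S` with largest eigenvalue `lam1`,
`c²·M²·Tr(S·(c²·M·S + σ²·I)⁻¹·S) ≤ c²·M²·n·λ₁² / (c²·M·λ₁ + σ²)`. -/
theorem stmt1 {n : ℕ} (hn : 1 ≤ n) (S : Matrix (Fin n) (Fin n) ℝ)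
    (hS : S.PosDef) (lam1 : ℝ)
    (hmax : ∀ i, hS.1.eigenvalues i ≤ lam1)
    (hatt : ∃ i, hS.1.eigenvalues i = lam1)
    (M : ℕ) (hM : 1 ≤ M) (c σ : ℝ) (hc : 0 < c) (hσ : 0 < σ) :
    c ^ 2 * (M : ℝ) ^ 2 *
        (S * ((c ^ 2 * (M : ℝ)) • S + σ ^ 2 • (1 : Matrix (Fin n) (Fin n) ℝ))⁻¹ * S).trace ≤
      c ^ 2 * (M : ℝ) ^ 2 * n * lam1 ^ 2 / (c ^ 2 * (M : ℝ) * lam1 + σ ^ 2) := by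
  set l := hS.1.eigenvalues with hl
  have hpos : ∀ i, 0 < l i := fun i => hS.eigenvalues_pos i
  have hM' : (0 : ℝ) < M := by exact_mod_cast hM
  obtain ⟨U, V, hUV, hVU, hSd⟩ : ∃ U V : Matrix (Fin n) (Fin n) ℝ,
      U * V = 1 ∧ V * U = 1 ∧ S = U * diagonal l * V := by
    refine ⟨hS.1.eigenvectorUnitary, star (hS.1.eigenvectorUnitary : Matrix (Fin n) (Fin n) ℝ),
      Unitary.mul_star_self_of_mem hS.1.eigenvectorUnitary.2,
      Unitary.star_mul_self_of_mem hS.1.eigenvectorUnitary.2, ?_⟩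
    have h := hS.1.spectral_theorem
    rw [Unitary.conjStarAlgAut_apply] at h
    exact h
  clear_value l
  set a : ℝ := c ^ 2 * (M : ℝ) with ha
  have hapos : 0 < a := by positivity
  have hs : 0 < σ ^ 2 := by positivity
  have hd : ∀ i, 0 < a * l i + σ ^ 2 := fun i => by
    have := mul_pos hapos (hpos i)
    linarith
  have hmul : ∀ f g : Fin n → ℝ, (U * diagonal f * V) * (U * diagonal g * V)
      = U * diagonal (fun i => f i * g i) * V := by
    intro f g
    calc (U * diagonal f * V) * (U * diagonal g * V)
        = U * diagonal f * (V * U) * diagonal g * V := by simp only [Matrix.mul_assoc]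
      _ = _ := by rw [hVU, Matrix.mul_one, Matrix.mul_assoc U, diagonal_mul_diagonal]
  have hA : a • S + σ ^ 2 • (1 : Matrix (Fin n) (Fin n) ℝ)
      = U * diagonal (fun i => a * l i + σ ^ 2) * V := by
    have : diagonal (fun i => a * l i + σ ^ 2)
        = a • diagonal l + σ ^ 2 • (1 : Matrix (Fin n) (Fin n) ℝ) := by
      rw [← diagonal_one, ← diagonal_smul, ← diagonal_smul, diagonal_add]
      congr 1
      ext i
      simp
    rw [this, Matrix.mul_add, Matrix.add_mul, Matrix.mul_smul, Matrix.smul_mul, Matrix.mul_smul,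
      Matrix.smul_mul, Matrix.mul_one, hUV, ← hSd]
  have hinv : (a • S + σ ^ 2 • (1 : Matrix (Fin n) (Fin n) ℝ))⁻¹
      = U * diagonal (fun i => (a * l i + σ ^ 2)⁻¹) * V := by
    apply Matrix.inv_eq_right_inv
    rw [hA, hmul]
    have : (fun i => (a * l i + σ ^ 2) * (a * l i + σ ^ 2)⁻¹) = fun _ => (1 : ℝ) := by
      ext i
      exact mul_inv_cancel₀ (hd i).ne'
    rw [this, diagonal_one, Matrix.mul_one, hUV]
  have htr : (S * (a • S + σ ^ 2 • (1 : Matrix (Fin n) (Fin n) ℝ))⁻¹ * S).trace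
      = ∑ i, l i * (a * l i + σ ^ 2)⁻¹ * l i := by
    rw [hinv, hSd, hmul, hmul, Matrix.trace_mul_comm, ← Matrix.mul_assoc, hVU, Matrix.one_mul,
      trace_diagonal]
  have hl1 : 0 < lam1 := by
    obtain ⟨i, hi⟩ := hatt
    exact hi ▸ hpos i
  have hd1 : 0 < a * lam1 + σ ^ 2 := by positivity
  have hbound : ∑ i, l i * (a * l i + σ ^ 2)⁻¹ * l i ≤ n * (lam1 ^ 2 / (a * lam1 + σ ^ 2)) := by
    calc ∑ i, l i * (a * l i + σ ^ 2)⁻¹ * l i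
        ≤ ∑ _i : Fin n, lam1 ^ 2 / (a * lam1 + σ ^ 2) := by
          apply Finset.sum_le_sum
          intro i _
          have h1 : l i * (a * l i + σ ^ 2)⁻¹ * l i = l i ^ 2 / (a * l i + σ ^ 2) := by
            rw [div_eq_mul_inv]; ring
          rw [h1, div_le_div_iff₀ (hd i) hd1]
          have e1 : 0 ≤ lam1 - l i := sub_nonneg.2 (hmax i)
          have p := hpos i
          have : 0 ≤ (lam1 - l i) * (a * lam1 * l i + σ ^ 2 * (lam1 + l i)) := by positivity
          nlinarith [this]
      _ = _ := by simp
  rw [htr]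
  calc _ ≤ c ^ 2 * (M : ℝ) ^ 2 * (n * (lam1 ^ 2 / (a * lam1 + σ ^ 2))) :=
        mul_le_mul_of_nonneg_left hbound (by positivity)
    _ = _ := by ring
end

section
/- Let γ₁, …, γ_M : Ω → ℝⁿ be independent, identically distributed, centered, square-integrable random vectors on a probability space (Ω, F, P) with common covariance matrix Σ = E[γ_m·γ_mᵀ] satisfying Tr(Σ) = 1, and let n_y : Ω → ℝⁿ be a centered square-integrable random vector with E[n_y·n_yᵀ] = σ_y²·I (σ_y > 0), independent of (γ₁, …, γ_M). Let c > 0, s = ∑_{m=1}^{M} γ_m, y = c·s + n_y, and K = c·M·Σ·(c²·M·Σ + σ_y²·I)⁻¹. Then E[‖K·y − s‖²] = M − c²·M²·Tr(Σ·(c²·M·Σ + σ_y²·I)⁻¹·Σ). -/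
open MeasureTheory ProbabilityTheory Matrix

lemma bilin_int {Ω ι κ : Type*} [MeasurableSpace Ω] [Fintype ι] [Fintype κ] (P : Measure Ω)
    (X : ι → Ω → ℝ) (Y : κ → Ω → ℝ) (hX : ∀ i, MemLp (X i) 2 P) (hY : ∀ i, MemLp (Y i) 2 P)
    (a : ι → ℝ) (b : κ → ℝ) :
    ∫ ω, (∑ i, a i * X i ω) * (∑ j, b j * Y j ω) ∂P
      = ∑ i, ∑ j, a i * b j * ∫ ω, X i ω * Y j ω ∂P := by
  have hI : ∀ i j, Integrable (fun ω => a i * b j * (X i ω * Y j ω)) P := fun i j =>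
    ((hX i).integrable_mul (hY j)).const_mul _
  have : ∀ ω, (∑ i, a i * X i ω) * (∑ j, b j * Y j ω)
      = ∑ i, ∑ j, a i * b j * (X i ω * Y j ω) := by
    intro ω
    rw [Finset.sum_mul_sum]
    refine Finset.sum_congr rfl fun i _ => Finset.sum_congr rfl fun j _ => by ring
  simp_rw [this]
  rw [integral_finsetSum _ (fun i _ => integrable_finsetSum _ (fun j _ => hI i j))]
  refine Finset.sum_congr rfl fun i _ => ?_
  rw [integral_finsetSum _ (fun j _ => hI i j)]
  refine Finset.sum_congr rfl fun j _ => integral_const_mul _ _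

lemma alg_part {n : ℕ} (S B K : Matrix (Fin n) (Fin n) ℝ) (c m σ : ℝ)
    (hB : B = (c ^ 2 * m) • S + σ ^ 2 • (1 : Matrix (Fin n) (Fin n) ℝ))
    (hu : IsUnit B.det) (hK : K = (c * m) • (S * B⁻¹)) (htr : S.trace = 1) :
    ((c • K - 1) * (m • S) * (c • K - 1)ᵀ).trace + σ ^ 2 * (K * Kᵀ).trace
      = m - c ^ 2 * m ^ 2 * (S * B⁻¹ * S).trace := by
  have h1 : K * B = (c * m) • S := by
    rw [hK, Matrix.smul_mul, Matrix.mul_assoc, Matrix.nonsing_inv_mul _ hu, Matrix.mul_one]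
  have h2 : K * S = (c * m) • (S * B⁻¹ * S) := by rw [hK, Matrix.smul_mul]
  have h3 : (K * B * Kᵀ).trace = c * m * (S * Kᵀ).trace := by
    rw [h1, Matrix.smul_mul, Matrix.trace_smul, smul_eq_mul]
  have h4 : (K * B * Kᵀ).trace = c ^ 2 * m * (K * S * Kᵀ).trace + σ ^ 2 * (K * Kᵀ).trace := by
    rw [hB]
    simp [Matrix.mul_add, Matrix.add_mul]
  have h5 : (K * S).trace = c * m * (S * B⁻¹ * S).trace := by rw [h2]; simp
  have h6 : ((c • K - 1) * (m • S) * (c • K - 1)ᵀ).trace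
      = c ^ 2 * m * (K * S * Kᵀ).trace - c * m * (K * S).trace - c * m * (S * Kᵀ).trace + m := by
    simp [Matrix.mul_sub, Matrix.sub_mul, htr]
    ring
  rw [h6]
  rw [h5]
  linarith

/-- achievability / MSE-approximation part of Theorem 1: the linear estimator
`d_y(y) = K·y` with `K = c·M·S·(c²·M·S + σ_y²·I)⁻¹` applied to the legitimate receiver's
observation `y = c·s + n_y`, where `s = ∑ m, γ m`, achieves mean squared error exactly
`M − c²·M²·Tr(S·(c²·M·S + σ_y²·I)⁻¹·S)`. -/
theorem stmt8 {Ω : Type*} [MeasurableSpace Ω] (P : Measure Ω) [IsProbabilityMeasure P]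
    {n M : ℕ} (hn : 1 ≤ n) (hM : 1 ≤ M)
    (γ : Fin M → Ω → Fin n → ℝ) (hγmeas : ∀ m, Measurable (γ m))
    (hγL2 : ∀ m, MemLp (γ m) 2 P)
    (hγindep : iIndepFun (m := fun _ : Fin M => (inferInstance : MeasurableSpace (Fin n → ℝ))) γ P)
    (hγident : ∀ m m', IdentDistrib (γ m) (γ m') P P)
    (hγcent : ∀ m i, ∫ ω, γ m ω i ∂P = 0)
    (S : Matrix (Fin n) (Fin n) ℝ) (hScov : ∀ m i j, S i j = ∫ ω, γ m ω i * γ m ω j ∂P)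
    (htr : S.trace = 1)
    (σy : ℝ) (hσy : 0 < σy)
    (ny : Ω → Fin n → ℝ) (hnymeas : Measurable ny) (hnyL2 : MemLp ny 2 P)
    (hnycent : ∀ i, ∫ ω, ny ω i ∂P = 0)
    (hnycov : ∀ i j, (∫ ω, ny ω i * ny ω j ∂P) = σy ^ 2 * (if i = j then 1 else 0))
    (hnyindep : IndepFun (fun ω m => γ m ω) ny P)
    (c : ℝ) (hc : 0 < c)
    (s y : Ω → Fin n → ℝ) (hs : ∀ ω, s ω = ∑ m, γ m ω) (hy : ∀ ω, y ω = c • s ω + ny ω)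
    (K : Matrix (Fin n) (Fin n) ℝ)
    (hK : K = (c * (M : ℝ)) •
      (S * ((c ^ 2 * (M : ℝ)) • S + σy ^ 2 • (1 : Matrix (Fin n) (Fin n) ℝ))⁻¹)) :
    ∫ ω, ∑ i, (K.mulVec (y ω) i - s ω i) ^ 2 ∂P =
      (M : ℝ) - c ^ 2 * (M : ℝ) ^ 2 *
        (S * ((c ^ 2 * (M : ℝ)) • S + σy ^ 2 • (1 : Matrix (Fin n) (Fin n) ℝ))⁻¹ * S).trace := by
  classical
  have hγi : ∀ m i, MemLp (fun ω => γ m ω i) 2 P := fun m i => (memLp_pi_iff.1 (hγL2 m)) i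
  have hni : ∀ i, MemLp (fun ω => ny ω i) 2 P := fun i => (memLp_pi_iff.1 hnyL2) i
  have hsi' : ∀ i, (fun ω => s ω i) = fun ω => ∑ m, γ m ω i := by
    intro i; ext ω; rw [hs]; simp
  have hsi : ∀ i, MemLp (fun ω => s ω i) 2 P := by
    intro i; rw [hsi' i]; exact memLp_finset_sum _ fun m _ => hγi m i
  have hγγ : ∀ m m' i j, ∫ ω, γ m ω i * γ m' ω j ∂P = if m = m' then S i j else 0 := by
    intro m m' i j
    split_ifs with h
    · subst h; exact (hScov m i j).symm
    · have hind : IndepFun (fun ω => γ m ω i) (fun ω => γ m' ω j) P :=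
        (hγindep.indepFun h).comp (measurable_pi_apply i) (measurable_pi_apply j)
      rw [hind.integral_fun_mul_eq_mul_integral (hγi m i).1 (hγi m' j).1, hγcent, zero_mul]
  have hγn : ∀ m i j, ∫ ω, γ m ω i * ny ω j ∂P = 0 := by
    intro m i j
    have hind : IndepFun (fun ω => γ m ω i) (fun ω => ny ω j) P :=
      hnyindep.comp (φ := fun f : Fin M → Fin n → ℝ => f m i) (ψ := fun f : Fin n → ℝ => f j)
        (by fun_prop) (by fun_prop)
    rw [hind.integral_fun_mul_eq_mul_integral (hγi m i).1 (hni j).1, hγcent, zero_mul]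
  have hss : ∀ i j, ∫ ω, s ω i * s ω j ∂P = M * S i j := by
    intro i j
    have := bilin_int P (fun m ω => γ m ω i) (fun m ω => γ m ω j) (fun m => hγi m i)
      (fun m => hγi m j) (fun _ => 1) (fun _ => 1)
    simp only [one_mul, hγγ] at this
    simp only [hs, Finset.sum_apply]
    rw [this]; simp
  have hsn : ∀ i j, ∫ ω, s ω i * ny ω j ∂P = 0 := by
    intro i j
    have := bilin_int P (fun m ω => γ m ω i) (fun (_ : Unit) ω => ny ω j) (fun m => hγi m i)
      (fun _ => hni j) (fun _ => 1) (fun _ => 1)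
    simp only [one_mul, hγn] at this
    simp only [hs, Finset.sum_apply]
    simpa using this
  have hS : S.PosSemidef := by
    refine Matrix.PosSemidef.of_dotProduct_mulVec_nonneg ?_ ?_
    · ext i j
      simp only [Matrix.conjTranspose_apply, star_trivial]
      rw [hScov ⟨0, hM⟩ j i, hScov ⟨0, hM⟩ i j]
      simp_rw [mul_comm]
    · intro x
      have := bilin_int P (fun i ω => γ ⟨0, hM⟩ ω i) (fun i ω => γ ⟨0, hM⟩ ω i) (hγi _) (hγi _) x x
      have h0 : star x ⬝ᵥ S *ᵥ x = ∫ ω, (∑ i, x i * γ ⟨0, hM⟩ ω i) * (∑ i, x i * γ ⟨0, hM⟩ ω i) ∂P := by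
        rw [this]
        simp only [dotProduct, Matrix.mulVec, Finset.mul_sum, ← hScov, star_trivial]
        refine Finset.sum_congr rfl fun i _ => Finset.sum_congr rfl fun j _ => ?_
        ring
      rw [h0]
      exact integral_nonneg fun ω => mul_self_nonneg _
  have hB : ((c ^ 2 * (M : ℝ)) • S + σy ^ 2 • (1 : Matrix (Fin n) (Fin n) ℝ)).PosDef :=
    Matrix.PosDef.posSemidef_add (hS.smul (by positivity)) (Matrix.PosDef.one.smul (by positivity))
  rw [← alg_part S _ K c M σy rfl (isUnit_iff_ne_zero.2 hB.det_pos.ne') hK htr]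
  set A := c • K - 1 with hA
  let Z : Fin n ⊕ Fin n → Ω → ℝ := Sum.elim (fun i ω => s ω i) (fun i ω => ny ω i)
  have hZ : ∀ k, MemLp (Z k) 2 P := by
    rintro (i | i)
    · exact hsi i
    · exact hni i
  let a : Fin n → Fin n ⊕ Fin n → ℝ := fun i => Sum.elim (A i) (K i)
  have hexp : ∀ ω i, K.mulVec (y ω) i - s ω i = ∑ k, a i k * Z k ω := by
    intro ω i
    have h1 : A.mulVec (s ω) i + K.mulVec (ny ω) i = K.mulVec (y ω) i - s ω i := by
      rw [hy, hA, Matrix.mulVec_add, Matrix.mulVec_smul, Matrix.sub_mulVec, Matrix.smul_mulVec,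
        Matrix.one_mulVec]
      simp only [Pi.add_apply, Pi.sub_apply]
      ring
    rw [← h1, Fintype.sum_sum_type]
    rfl
  have hns : ∀ i j, ∫ ω, ny ω i * s ω j ∂P = 0 := by
    intro i j
    rw [← hsn j i]
    simp_rw [mul_comm]
  have hint : ∀ i, Integrable (fun ω => (∑ k, a i k * Z k ω) ^ 2) P := fun i =>
    (memLp_finset_sum _ fun k _ => (hZ k).const_mul (a i k)).integrable_sq
  simp_rw [hexp]
  rw [integral_finsetSum _ (fun i _ => hint i)]
  have hi : ∀ i, ∫ ω, (∑ k, a i k * Z k ω) ^ 2 ∂P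
      = (A * ((M : ℝ) • S) * Aᵀ) i i + σy ^ 2 * (K * Kᵀ) i i := by
    intro i
    simp_rw [pow_two (∑ k, a i k * Z k _)]
    rw [bilin_int P Z Z hZ hZ]
    simp only [Fintype.sum_sum_type, a, Z, Sum.elim_inl, Sum.elim_inr, hss, hsn, hns, hnycov,
      mul_zero, Finset.sum_const_zero, add_zero, zero_add]
    congr 1
    · simp only [Matrix.mul_apply, Matrix.transpose_apply, Matrix.smul_apply, smul_eq_mul,
        Finset.sum_mul]
      rw [Finset.sum_comm]
      refine Finset.sum_congr rfl fun j _ => Finset.sum_congr rfl fun k _ => ?_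
      ring
    · simp only [Matrix.mul_apply, Matrix.transpose_apply, Finset.mul_sum]
      refine Finset.sum_congr rfl fun j _ => ?_
      simp
      ring
  simp_rw [hi]
  rw [Finset.sum_add_distrib, ← Finset.mul_sum]
  rfl
end

section
/- Let M ≥ 2, let h ∈ ℝ^M with h_M ≠ 0, let d₁, …, d_{M−1} ∈ ℝ, and let A = diag(d₁,…,d_{M−1})·A′, where A′ is the (M−1)×M matrix whose i-th row r_i satisfies (r_i)_i = 1, (r_i)_M = −h_i/h_M, and (r_i)_j = 0 otherwise. Let g₁, …, g_M be mutually independent real square-integrable random variables with E[g_m] = σ_g·√(π/2) and E[g_m²] = 2·σ_g² for all m, where σ_g > 0. Then E[‖A·g‖²] = σ_g²·∑_{i=1}^{M−1} d_i²·(2·h_i²/h_M² − π·h_i/h_M + 2). -/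
open MeasureTheory ProbabilityTheory Matrix Real

/-- expected artificial-noise power at the eavesdropper, Section IV-B: with
`A = diag(d₁,…,d_{M−1})·A′`, `A′` the reduced-row-echelon-form null-space basis of `h`, and
`g₁,…,g_M` mutually independent random variables with the first two moments of a Rayleigh
distribution with scale `σ_g` (`E[g_m] = σ_g·√(π/2)`, `E[g_m²] = 2·σ_g²`), one has
`E[‖A·g‖²] = σ_g²·∑ i, d_i²·(2·h_i²/h_M² − π·h_i/h_M + 2)`,
where `‖·‖` is the Euclidean norm (`‖v‖² = ∑ i, v_i²`). -/
theorem stmt16 {Ω : Type*} [MeasurableSpace Ω] (P : Measure Ω) [IsProbabilityMeasure P]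
    {M : ℕ} (hM : 2 ≤ M) (h : Fin M → ℝ)
    (hlast : h ⟨M - 1, by omega⟩ ≠ 0)
    (d : Fin (M - 1) → ℝ)
    (A' : Matrix (Fin (M - 1)) (Fin M) ℝ)
    (hA' : ∀ (i : Fin (M - 1)) (j : Fin M), A' i j =
      if (j : ℕ) = (i : ℕ) then 1
      else if (j : ℕ) = M - 1 then -(h (Fin.castLE (by omega) i) / h ⟨M - 1, by omega⟩)
      else 0)
    (A : Matrix (Fin (M - 1)) (Fin M) ℝ) (hA : A = Matrix.diagonal d * A')
    (σg : ℝ) (hσg : 0 < σg)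
    (g : Fin M → Ω → ℝ) (hgmeas : ∀ m, Measurable (g m))
    (hgL2 : ∀ m, MemLp (g m) 2 P)
    (hgindep : iIndepFun (m := fun _ : Fin M => (inferInstance : MeasurableSpace ℝ)) g P)
    (hgmean : ∀ m, ∫ ω, g m ω ∂P = σg * Real.sqrt (π / 2))
    (hgsq : ∀ m, ∫ ω, (g m ω) ^ 2 ∂P = 2 * σg ^ 2) :
    ∫ ω, ∑ i, (A.mulVec (fun m => g m ω) i) ^ 2 ∂P =
      σg ^ 2 * ∑ i : Fin (M - 1), (d i) ^ 2 *
        (2 * (h (Fin.castLE (by omega) i)) ^ 2 / (h ⟨M - 1, by omega⟩) ^ 2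
          - π * (h (Fin.castLE (by omega) i)) / h ⟨M - 1, by omega⟩ + 2) := by
  have hrow : ∀ i ω, A.mulVec (fun m => g m ω) i =
      d i * (g (Fin.castLE (by omega) i) ω -
        h (Fin.castLE (by omega) i) / h ⟨M - 1, by omega⟩ * g ⟨M - 1, by omega⟩ ω) := by
    intro i ω
    have hi := i.2
    have hne : (Fin.castLE (by omega) i : Fin M) ≠ ⟨M - 1, by omega⟩ := by
      intro e
      have := congrArg Fin.val e
      simp at this
      omega
    rw [hA, ← Matrix.mulVec_mulVec, Matrix.mulVec_diagonal]
    congr 1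
    simp only [Matrix.mulVec, dotProduct]
    rw [Fintype.sum_eq_add _ _ hne]
    · have h2 : ¬ (M - 1 = (i : ℕ)) := by omega
      simp [hA', h2]
      ring
    · rintro x ⟨hx1, hx2⟩
      have h1 : ¬ ((x : ℕ) = i) := fun e => hx1 (Fin.ext (by simpa using e))
      have h2 : ¬ ((x : ℕ) = M - 1) := fun e => hx2 (Fin.ext (by simpa using e))
      simp [hA', h1, h2]
  have hmul : ∀ a b, Integrable (fun ω => g a ω * g b ω) P := fun a b =>
    (hgL2 a).integrable_mul (hgL2 b)
  have hsqi : ∀ a, Integrable (fun ω => g a ω ^ 2) P := fun a => (hgL2 a).integrable_sq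
  have hexp : ∀ i ω, (A.mulVec (fun m => g m ω) i) ^ 2 =
      d i ^ 2 * (g (Fin.castLE (by omega) i) ω ^ 2) -
      (2 * d i ^ 2 * (h (Fin.castLE (by omega) i) / h ⟨M - 1, by omega⟩)) *
        (g (Fin.castLE (by omega) i) ω * g ⟨M - 1, by omega⟩ ω) +
      (d i ^ 2 * (h (Fin.castLE (by omega) i) / h ⟨M - 1, by omega⟩) ^ 2) *
        (g ⟨M - 1, by omega⟩ ω ^ 2) := by
    intro i ω
    rw [hrow]
    ring
  simp only [hexp]
  rw [integral_finsetSum, Finset.mul_sum]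
  · refine Finset.sum_congr rfl fun i _ => ?_
    have hi := i.2
    have hne : (Fin.castLE (by omega) i : Fin M) ≠ ⟨M - 1, by omega⟩ := by
      intro e
      have := congrArg Fin.val e
      simp at this
      omega
    have hdiff : ∀ (a b : Fin M) (x y : ℝ),
        Integrable (fun ω => x * g a ω ^ 2 - y * (g a ω * g b ω)) P := fun a b x y =>
      ((hsqi a).const_mul x).sub ((hmul a b).const_mul y)
    rw [integral_add (hdiff _ _ _ _) ((hsqi _).const_mul _), integral_sub ((hsqi _).const_mul _) ((hmul _ _).const_mul _),
      integral_const_mul, integral_const_mul, integral_const_mul, hgsq, hgsq,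
      (hgindep.indepFun hne).integral_fun_mul_eq_mul_integral
        (hgmeas _).aestronglyMeasurable (hgmeas _).aestronglyMeasurable, hgmean, hgmean]
    have hs : Real.sqrt (π / 2) * Real.sqrt (π / 2) = π / 2 :=
      Real.mul_self_sqrt (by positivity)
    have hs2 : σg * Real.sqrt (π / 2) * (σg * Real.sqrt (π / 2)) = σg ^ 2 * (π / 2) := by
      linear_combination σg ^ 2 * hs
    rw [hs2]
    field_simp
    ring
  · intro i _
    exact (((hsqi _).const_mul _).sub ((hmul _ _).const_mul _)).add ((hsqi _).const_mul _)
end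

section
/- On a probability space (Ω, F, P), let γ₁, …, γ_M : Ω → ℝⁿ be i.i.d. centered square-integrable random vectors with covariance Σ = E[γ_m·γ_mᵀ] satisfying Tr(Σ) = 1, let V : Ω → ℝ^{n×(M−1)} have mutually independent, centered, unit-variance entries, and let n_z : Ω → ℝⁿ be centered with E[n_z·n_zᵀ] = σ_z²·I; assume (γ₁,…,γ_M), V and n_z are mutually independent. Let c > 0, h ∈ ℝ^M with all entries nonzero, g ∈ ℝ^M, A ∈ ℝ^{(M−1)×M} with ‖A·g‖² + σ_z² > 0, and set s = ∑_{m=1}^{M} γ_m, z = c·∑_{m=1}^{M} (g_m/h_m)·γ_m + V·(A·g) + n_z, and R = c²·(∑_{m=1}^{M} g_m²/h_m²)·Σ + (‖A·g‖² + σ_z²)·I. Then for every matrix K ∈ ℝ^{n×n} and vector b ∈ ℝⁿ, E[‖K·z + b − s‖²] ≥ M − c²·(∑_{m=1}^{M} g_m/h_m)²·Tr(Σ·R⁻¹·Σ). -/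
open MeasureTheory ProbabilityTheory Matrix

/-- Index type for the joint family consisting of the `M` user inputs `γ_m`, the
`n·(M−1)` entries of the artificial-noise matrix `V`, and the channel noise `n_z`. -/
abbrev JointIdx (M n : ℕ) : Type := Fin M ⊕ (Fin n × Fin (M - 1)) ⊕ Unit

/-- Codomains of the joint family: `γ_m` and `n_z` are `ℝⁿ`-valued, the entries of `V`
are real-valued. -/
def jointCod (M n : ℕ) : JointIdx M n → Type
  | .inl _ => Fin n → ℝ
  | .inr (.inl _) => ℝ
  | .inr (.inr _) => Fin n → ℝ

/-- The measurable-space structures on the codomains of the joint family. -/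
def jointCodMS (M n : ℕ) : ∀ i : JointIdx M n, MeasurableSpace (jointCod M n i)
  | .inl _ => inferInstanceAs (MeasurableSpace (Fin n → ℝ))
  | .inr (.inl _) => inferInstanceAs (MeasurableSpace ℝ)
  | .inr (.inr _) => inferInstanceAs (MeasurableSpace (Fin n → ℝ))

/-- The joint family `(γ₁, …, γ_M, (V i j)_{i,j}, n_z)` of random quantities; asserting
`iIndepFun` for this family expresses that the inputs `γ_m`, the entries of `V`, and the
noise `n_z` are all mutually independent. -/
def jointFam {Ω : Type*} {M n : ℕ} (γ : Fin M → Ω → Fin n → ℝ)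
    (V : Ω → Matrix (Fin n) (Fin (M - 1)) ℝ) (nz : Ω → Fin n → ℝ) :
    ∀ i : JointIdx M n, Ω → jointCod M n i
  | .inl m => γ m
  | .inr (.inl p) => fun ω => V ω p.1 p.2
  | .inr (.inr _) => nz


lemma aux_linalg {n : ℕ} (S R K : Matrix (Fin n) (Fin n) ℝ) (κ : ℝ)
    (hS : Sᵀ = S) (hR : R.PosDef) :
    0 ≤ (K * R * Kᵀ).trace - 2 * κ * (K * S).trace + κ ^ 2 * (S * R⁻¹ * S).trace := by
  have hRt : Rᵀ = R := by simpa [Matrix.IsHermitian] using hR.1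
  have hu : IsUnit R.det := hR.det_pos.ne'.isUnit
  have h1 : R * R⁻¹ = 1 := Matrix.mul_nonsing_inv R hu
  have h2 : R⁻¹ * R = 1 := Matrix.nonsing_inv_mul R hu
  have hp := (hR.posSemidef.mul_mul_conjTranspose_same (K - κ • (S * R⁻¹))).trace_nonneg
  have hT : (K - κ • (S * R⁻¹))ᴴ = Kᵀ - κ • (R⁻¹ * S) := by
    rw [Matrix.conjTranspose_eq_transpose_of_trivial]
    simp [Matrix.transpose_sub, Matrix.transpose_mul, Matrix.transpose_nonsing_inv, hRt, hS]
  rw [hT] at hp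
  have e : (K - κ • (S * R⁻¹)) * R * (Kᵀ - κ • (R⁻¹ * S))
      = K * R * Kᵀ - κ • (K * S) - κ • (S * Kᵀ) + κ ^ 2 • (S * R⁻¹ * S) := by
    have a1 : K * R * (R⁻¹ * S) = K * S := by
      rw [← Matrix.mul_assoc, Matrix.mul_assoc K, h1, Matrix.mul_one]
    have a2 : (S * R⁻¹) * R = S := by rw [Matrix.mul_assoc, h2, Matrix.mul_one]
    rw [Matrix.sub_mul, Matrix.smul_mul, a2, Matrix.mul_sub, Matrix.sub_mul, Matrix.sub_mul,
      Matrix.mul_smul, Matrix.mul_smul, a1, Matrix.smul_mul, Matrix.smul_mul, smul_smul,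
      ← Matrix.mul_assoc, sq]
    abel
  rw [e] at hp
  have t : (S * Kᵀ).trace = (K * S).trace := by
    rw [← Matrix.trace_transpose (S * Kᵀ), Matrix.transpose_mul, hS, Matrix.transpose_transpose]
  simp only [Matrix.trace_add, Matrix.trace_sub, Matrix.trace_smul, smul_eq_mul, t] at hp
  linarith

lemma aux_cov_center {Ω : Type*} [MeasurableSpace Ω] (P : Measure Ω) [IsProbabilityMeasure P]
    {X Y : Ω → ℝ} (hX : MemLp X 2 P) (hY : MemLp Y 2 P) (h0 : ∫ ω, X ω ∂P = 0) :
    cov[X, Y; P] = ∫ ω, X ω * Y ω ∂P := by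
  rw [covariance_eq_sub hX hY, h0]; simp

lemma aux_moment {Ω : Type*} [MeasurableSpace Ω] (P : Measure Ω) [IsProbabilityMeasure P]
    {n : ℕ} (s z : Ω → Fin n → ℝ) (S R K : Matrix (Fin n) (Fin n) ℝ) (b : Fin n → ℝ) (κ M : ℝ)
    (hS : Sᵀ = S) (hR : R.PosDef) (htr : S.trace = 1)
    (hs : ∀ i, MemLp (fun ω => s ω i) 2 P) (hz : ∀ i, MemLp (fun ω => z ω i) 2 P)
    (hzz : ∀ i j, cov[fun ω => z ω i, fun ω => z ω j; P] = R i j)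
    (hzs : ∀ i j, cov[fun ω => z ω i, fun ω => s ω j; P] = κ * S i j)
    (hss : ∀ i, cov[fun ω => s ω i, fun ω => s ω i; P] = M * S i i) :
    M - κ ^ 2 * (S * R⁻¹ * S).trace
      ≤ ∫ ω, ∑ i, (K.mulVec (z ω) i + b i - s ω i) ^ 2 ∂P := by
  have hKz : ∀ i, MemLp (fun ω => K.mulVec (z ω) i) 2 P := by
    intro i
    simp only [Matrix.mulVec, dotProduct]
    exact memLp_finsetSum _ fun j _ => (hz j).const_mul (K i j)
  have hX : ∀ i, MemLp (fun ω => K.mulVec (z ω) i + b i - s ω i) 2 P := fun i =>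
    ((hKz i).add (memLp_const (b i))).sub (hs i)
  rw [integral_finsetSum _ fun i _ => (hX i).integrable_sq]
  have key : ∀ i, (∑ j, ∑ k, K i j * (K i k * R j k)) - 2 * κ * (∑ j, K i j * S j i) + M * S i i
      ≤ ∫ ω, (K.mulVec (z ω) i + b i - s ω i) ^ 2 ∂P := by
    intro i
    refine le_trans (le_of_eq ?_) (variance_le_expectation_sq (hX i).aestronglyMeasurable)
    rw [← covariance_self (hX i).aemeasurable]
    have hD : MemLp (fun ω => K.mulVec (z ω) i - s ω i) 2 P := (hKz i).sub (hs i)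
    have hre : (fun ω => K.mulVec (z ω) i + b i - s ω i)
        = fun ω => (K.mulVec (z ω) i - s ω i) + b i := by
      funext ω; ring
    rw [hre, covariance_add_const_left (hD.integrable one_le_two),
      covariance_add_const_right (hD.integrable one_le_two),
      covariance_fun_sub_fun_sub (hKz i) (hs i) (hKz i) (hs i), hss,
      covariance_comm (fun ω => s ω i) (fun ω => K.mulVec (z ω) i)]
    have c1 : cov[fun ω => K.mulVec (z ω) i, fun ω => s ω i; P] = κ * ∑ j, K i j * S j i := by
      simp only [Matrix.mulVec, dotProduct]
      rw [covariance_fun_sum_left (fun j => (hz j).const_mul (K i j)) (hs i), Finset.mul_sum]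
      refine Finset.sum_congr rfl fun j _ => ?_
      rw [covariance_const_mul_left, hzs]; ring
    have c2 : cov[fun ω => K.mulVec (z ω) i, fun ω => K.mulVec (z ω) i; P]
        = ∑ j, ∑ k, K i j * (K i k * R j k) := by
      simp only [Matrix.mulVec, dotProduct]
      rw [covariance_fun_sum_fun_sum (fun j => (hz j).const_mul (K i j))
        (fun j => (hz j).const_mul (K i j))]
      refine Finset.sum_congr rfl fun j _ => Finset.sum_congr rfl fun k _ => ?_
      rw [covariance_const_mul_left, covariance_const_mul_right, hzz]
    rw [c1, c2]; ring
  refine le_trans ?_ (Finset.sum_le_sum fun i _ => key i)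
  have hl := aux_linalg S R K κ hS hR
  have t1 : (K * R * Kᵀ).trace = ∑ i, ∑ j, ∑ k, K i j * (K i k * R j k) := by
    simp only [Matrix.trace, Matrix.diag_apply, Matrix.mul_apply, Matrix.transpose_apply,
      Finset.sum_mul]
    refine Finset.sum_congr rfl fun i _ => ?_
    rw [Finset.sum_comm]
    refine Finset.sum_congr rfl fun j _ => Finset.sum_congr rfl fun k _ => ?_
    ring
  have t2 : (K * S).trace = ∑ i, ∑ j, K i j * S j i := by
    simp only [Matrix.trace, Matrix.diag_apply, Matrix.mul_apply]
  have t3 : ∑ i, M * S i i = M := by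
    rw [← Finset.mul_sum]
    simp only [Matrix.trace, Matrix.diag_apply] at htr
    rw [htr, mul_one]
  rw [Finset.sum_add_distrib, Finset.sum_sub_distrib, ← Finset.mul_sum, t3, ← t1, ← t2]
  linarith

/-- MSE-security of Theorem 1 restricted to affine estimators: for the
proposed scheme, every affine estimate `K·z + b` of the computation result `s = ∑ m, γ m` from
the eavesdropper's observation `z` incurs mean squared error at least the security level
`M − c²·(∑ m, g_m/h_m)²·Tr(S·R⁻¹·S)`, where
`R = c²·(∑ m, g_m²/h_m²)·S + (‖A·g‖² + σ_z²)·I` and `‖v‖² = ∑ i, v_i²`. -/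
theorem stmt18 {Ω : Type*} [MeasurableSpace Ω] (P : Measure Ω) [IsProbabilityMeasure P]
    {n M : ℕ} (hn : 1 ≤ n) (hM : 1 ≤ M)
    (γ : Fin M → Ω → Fin n → ℝ) (hγmeas : ∀ m, Measurable (γ m))
    (hγL2 : ∀ m, MemLp (γ m) 2 P)
    (hγident : ∀ m m', IdentDistrib (γ m) (γ m') P P)
    (hγcent : ∀ m i, ∫ ω, γ m ω i ∂P = 0)
    (S : Matrix (Fin n) (Fin n) ℝ) (hScov : ∀ m i j, S i j = ∫ ω, γ m ω i * γ m ω j ∂P)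
    (htr : S.trace = 1)
    (V : Ω → Matrix (Fin n) (Fin (M - 1)) ℝ)
    (hVmeas : ∀ i j, Measurable fun ω => V ω i j)
    (hVcent : ∀ i j, ∫ ω, V ω i j ∂P = 0)
    (hVvar : ∀ i j, ∫ ω, (V ω i j) ^ 2 ∂P = 1)
    (hVL2 : ∀ i j, MemLp (fun ω => V ω i j) 2 P)
    (σz : ℝ)
    (nz : Ω → Fin n → ℝ) (hnzmeas : Measurable nz) (hnzL2 : MemLp nz 2 P)
    (hnzcent : ∀ i, ∫ ω, nz ω i ∂P = 0)
    (hnzcov : ∀ i j, (∫ ω, nz ω i * nz ω j ∂P) = σz ^ 2 * (if i = j then 1 else 0))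
    (hindep : iIndepFun (m := jointCodMS M n) (jointFam γ V nz) P)
    (c : ℝ) (hc : 0 < c) (h g : Fin M → ℝ) (hh : ∀ m, h m ≠ 0)
    (A : Matrix (Fin (M - 1)) (Fin M) ℝ)
    (hAgpos : 0 < (∑ t, (A.mulVec g t) ^ 2) + σz ^ 2)
    (s z : Ω → Fin n → ℝ) (hs : ∀ ω, s ω = ∑ m, γ m ω)
    (hz : ∀ ω, z ω = c • (∑ m, (g m / h m) • γ m ω) + (V ω).mulVec (A.mulVec g) + nz ω)
    (R : Matrix (Fin n) (Fin n) ℝ)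
    (hR : R = (c ^ 2 * ∑ m, (g m) ^ 2 / (h m) ^ 2) • S +
      ((∑ t, (A.mulVec g t) ^ 2) + σz ^ 2) • (1 : Matrix (Fin n) (Fin n) ℝ)) :
    ∀ (K : Matrix (Fin n) (Fin n) ℝ) (b : Fin n → ℝ),
      ∫ ω, ∑ i, (K.mulVec (z ω) i + b i - s ω i) ^ 2 ∂P ≥
        (M : ℝ) - c ^ 2 * (∑ m, g m / h m) ^ 2 * (S * R⁻¹ * S).trace := by
  intro K b
  have hγi : ∀ m i, MemLp (fun ω => γ m ω i) 2 P := fun m i => (hγL2 m).eval i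
  have hni : ∀ i, MemLp (fun ω => nz ω i) 2 P := fun i => hnzL2.eval i
  have cγγ : ∀ m m' i j, cov[fun ω => γ m ω i, fun ω => γ m' ω j; P]
      = if m = m' then S i j else 0 := by
    intro m m' i j
    split_ifs with hm
    · subst hm
      rw [aux_cov_center P (hγi m i) (hγi m j) (hγcent m i), hScov m i j]
    · have hi : IndepFun (γ m) (γ m') P :=
        hindep.indepFun (i := Sum.inl m) (j := Sum.inl m') (by simpa using hm)
      exact (hi.comp (measurable_pi_apply i) (measurable_pi_apply j)).covariance_eq_zero
        (hγi m i) (hγi m' j)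
  have cγV : ∀ m i j t, cov[fun ω => γ m ω i, fun ω => V ω j t; P] = 0 := by
    intro m i j t
    have hi : IndepFun (γ m) (fun ω => V ω j t) P :=
      hindep.indepFun (i := Sum.inl m) (j := Sum.inr (Sum.inl (j, t))) (by simp)
    exact (hi.comp (measurable_pi_apply i) measurable_id).covariance_eq_zero
        (hγi m i) (hVL2 j t)
  have cγn : ∀ m i j, cov[fun ω => γ m ω i, fun ω => nz ω j; P] = 0 := by
    intro m i j
    have hi : IndepFun (γ m) nz P :=
      hindep.indepFun (i := Sum.inl m) (j := Sum.inr (Sum.inr ())) (by simp)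
    exact (hi.comp (measurable_pi_apply i) (measurable_pi_apply j)).covariance_eq_zero
        (hγi m i) (hni j)
  have cVn : ∀ i t j, cov[fun ω => V ω i t, fun ω => nz ω j; P] = 0 := by
    intro i t j
    have hi : IndepFun (fun ω => V ω i t) nz P :=
      hindep.indepFun (i := Sum.inr (Sum.inl (i, t))) (j := Sum.inr (Sum.inr ())) (by simp)
    exact (hi.comp measurable_id (measurable_pi_apply j)).covariance_eq_zero
        (hVL2 i t) (hni j)
  have cVV : ∀ i t j t', cov[fun ω => V ω i t, fun ω => V ω j t'; P]
      = if t = t' then (if i = j then 1 else 0) else 0 := by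
    intro i t j t'
    by_cases hp : (i, t) = (j, t')
    · obtain ⟨rfl, rfl⟩ := Prod.mk.inj hp
      rw [aux_cov_center P (hVL2 i t) (hVL2 i t) (hVcent i t)]
      simp [← hVvar i t, sq]
    · have hi : IndepFun (fun ω => V ω i t) (fun ω => V ω j t') P :=
        hindep.indepFun (i := Sum.inr (Sum.inl (i, t))) (j := Sum.inr (Sum.inl (j, t')))
          (by intro hc; exact hp (Sum.inl.inj (Sum.inr.inj hc)))
      rw [hi.covariance_eq_zero (hVL2 i t) (hVL2 j t')]
      split_ifs with h1 h2
      · exact absurd (by rw [h1, h2]) hp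
      · rfl
      · rfl
  have cnn : ∀ i j, cov[fun ω => nz ω i, fun ω => nz ω j; P]
      = σz ^ 2 * (if i = j then 1 else 0) := by
    intro i j
    rw [aux_cov_center P (hni i) (hni j) (hnzcent i), hnzcov]
  set a : Fin (M - 1) → ℝ := A.mulVec g with ha
  -- the three parts of the observation
  let G : Fin n → Ω → ℝ := fun i ω => ∑ m, (c * (g m / h m)) * γ m ω i
  let W : Fin n → Ω → ℝ := fun i ω => ∑ t, a t * V ω i t
  let N : Fin n → Ω → ℝ := fun i ω => nz ω i
  have hGL : ∀ i, MemLp (G i) 2 P := fun i =>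
    memLp_finsetSum _ fun m _ => (hγi m i).const_mul _
  have hWL : ∀ i, MemLp (W i) 2 P := fun i =>
    memLp_finsetSum _ fun t _ => (hVL2 i t).const_mul _
  have hNL : ∀ i, MemLp (N i) 2 P := hni
  have hzc : ∀ i, (fun ω => z ω i) = G i + W i + N i := by
    intro i; funext ω
    simp only [hz, G, W, N, Pi.add_apply, Pi.smul_apply, Finset.sum_apply, smul_eq_mul,
      Matrix.mulVec, dotProduct, Finset.mul_sum]
    congr 2
    · exact Finset.sum_congr rfl fun m _ => by ring
    · exact Finset.sum_congr rfl fun m _ => by ring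
  have hsc : ∀ i, (fun ω => s ω i) = fun ω => ∑ m, γ m ω i := by
    intro i; funext ω; simp [hs]
  have hsL : ∀ i, MemLp (fun ω => s ω i) 2 P := fun i => by
    rw [hsc]; exact memLp_finsetSum _ fun m _ => hγi m i
  have hzL : ∀ i, MemLp (fun ω => z ω i) 2 P := fun i => by
    rw [hzc]; exact ((hGL i).add (hWL i)).add (hNL i)
  have GG : ∀ i j, cov[G i, G j; P] = (c ^ 2 * ∑ m, (g m) ^ 2 / (h m) ^ 2) * S i j := by
    intro i j
    rw [covariance_fun_sum_fun_sum (fun m => (hγi m i).const_mul _)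
      (fun m => (hγi m j).const_mul _)]
    simp only [covariance_const_mul_left, covariance_const_mul_right, cγγ, mul_ite, mul_zero,
      Finset.sum_ite_eq, Finset.mem_univ, if_true]
    rw [Finset.mul_sum, Finset.sum_mul]
    refine Finset.sum_congr rfl fun m _ => ?_
    rw [← div_pow]; ring
  have WW : ∀ i j, cov[W i, W j; P] = (∑ t, a t ^ 2) * (if i = j then 1 else 0) := by
    intro i j
    rw [covariance_fun_sum_fun_sum (fun t => (hVL2 i t).const_mul _)
      (fun t => (hVL2 j t).const_mul _)]
    simp only [covariance_const_mul_left, covariance_const_mul_right, cVV]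
    rw [Finset.sum_mul]
    refine Finset.sum_congr rfl fun t _ => ?_
    rw [Finset.sum_eq_single t (fun t' _ ht => by rw [if_neg ht.symm]; ring) (by simp)]
    rw [if_pos rfl]; ring
  have GW : ∀ i j, cov[G i, W j; P] = 0 := by
    intro i j
    rw [covariance_fun_sum_fun_sum (fun m => (hγi m i).const_mul _)
      (fun t => (hVL2 j t).const_mul _)]
    simp only [covariance_const_mul_left, covariance_const_mul_right, cγV, mul_zero,
      Finset.sum_const_zero]
  have GN : ∀ i j, cov[G i, N j; P] = 0 := by
    intro i j
    rw [covariance_fun_sum_left (fun m => (hγi m i).const_mul _) (hNL j)]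
    simp only [covariance_const_mul_left, N, cγn, mul_zero, Finset.sum_const_zero]
  have WN : ∀ i j, cov[W i, N j; P] = 0 := by
    intro i j
    rw [covariance_fun_sum_left (fun t => (hVL2 i t).const_mul _) (hNL j)]
    simp only [covariance_const_mul_left, N, cVn, mul_zero, Finset.sum_const_zero]
  have hzz : ∀ i j, cov[fun ω => z ω i, fun ω => z ω j; P] = R i j := by
    intro i j
    have hL := ((hGL j).add (hWL j)).add (hNL j)
    have hL' := (hGL j).add (hWL j)
    rw [hzc, hzc, covariance_add_left ((hGL i).add (hWL i)) (hNL i) hL,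
      covariance_add_left (hGL i) (hWL i) hL,
      covariance_add_right (hGL i) hL' (hNL j), covariance_add_right (hGL i) (hGL j) (hWL j),
      covariance_add_right (hWL i) hL' (hNL j), covariance_add_right (hWL i) (hGL j) (hWL j),
      covariance_add_right (hNL i) hL' (hNL j), covariance_add_right (hNL i) (hGL j) (hWL j),
      covariance_comm (W i) (G j), covariance_comm (N i) (G j), covariance_comm (N i) (W j),
      GG, GW, GN, GW, WW, WN, GN, WN, show cov[N i, N j; P] = _ from cnn i j, hR]
    simp only [Matrix.add_apply, Matrix.smul_apply, Matrix.one_apply, smul_eq_mul]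
    ring
  have hzs : ∀ i j, cov[fun ω => z ω i, fun ω => s ω j; P]
      = (c * ∑ m, g m / h m) * S i j := by
    intro i j
    rw [hzc, covariance_add_left ((hGL i).add (hWL i)) (hNL i) (hsL j),
      covariance_add_left (hGL i) (hWL i) (hsL j), hsc]
    have e1 : cov[G i, fun ω => ∑ m, γ m ω j; P] = (c * ∑ m, g m / h m) * S i j := by
      rw [covariance_fun_sum_fun_sum (fun m => (hγi m i).const_mul _) (fun m => hγi m j)]
      simp only [covariance_const_mul_left, cγγ, mul_ite, mul_zero,
        Finset.sum_ite_eq, Finset.mem_univ, if_true]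
      rw [Finset.mul_sum, Finset.sum_mul]
    have e2 : cov[W i, fun ω => ∑ m, γ m ω j; P] = 0 := by
      rw [covariance_comm, covariance_fun_sum_fun_sum (fun m => hγi m j)
        (fun t => (hVL2 i t).const_mul _)]
      simp only [covariance_const_mul_right, cγV, mul_zero, Finset.sum_const_zero]
    have e3 : cov[N i, fun ω => ∑ m, γ m ω j; P] = 0 := by
      rw [covariance_comm, covariance_fun_sum_left (fun m => hγi m j) (hNL i)]
      simp only [N, cγn, Finset.sum_const_zero]
    rw [e1, e2, e3]; ring
  have hss : ∀ i, cov[fun ω => s ω i, fun ω => s ω i; P] = (M : ℝ) * S i i := by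
    intro i
    rw [hsc, covariance_fun_sum_fun_sum (fun m => hγi m i) (fun m => hγi m i)]
    simp [cγγ]
  have hS : Sᵀ = S := by
    ext i j
    rw [Matrix.transpose_apply, hScov ⟨0, hM⟩, hScov ⟨0, hM⟩]
    simp only [mul_comm]
  have hSpsd : S.PosSemidef := by
    refine .of_dotProduct_mulVec_nonneg (by simpa [Matrix.IsHermitian] using hS) fun x => ?_
    have hL : MemLp (fun ω => ∑ i, x i * γ ⟨0, hM⟩ ω i) 2 P :=
      memLp_finsetSum _ fun i _ => (hγi _ i).const_mul _
    have hv := variance_nonneg (fun ω => ∑ i, x i * γ ⟨0, hM⟩ ω i) P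
    rw [← covariance_self hL.aemeasurable, covariance_fun_sum_fun_sum
      (fun i => (hγi _ i).const_mul _) (fun i => (hγi _ i).const_mul _)] at hv
    simp only [covariance_const_mul_left, covariance_const_mul_right, cγγ, if_true] at hv
    refine hv.trans (le_of_eq ?_)
    simp only [dotProduct, Matrix.mulVec, Pi.star_apply, star_trivial, Finset.mul_sum]
    refine Finset.sum_congr rfl fun i _ => Finset.sum_congr rfl fun j _ => ?_
    ring
  have hRpd : R.PosDef := by
    rw [hR]
    exact Matrix.PosDef.posSemidef_add
      (hSpsd.smul (mul_nonneg (sq_nonneg c) (Finset.sum_nonneg fun m _ => by positivity)))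
      (Matrix.PosDef.one.smul hAgpos)
  have := aux_moment P s z S R K b (c * ∑ m, g m / h m) M hS hRpd htr hsL hzL hzz hzs hss
  rw [mul_pow] at this
  exact this
end
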